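/- Let Ω ⊆ ℝ³ be open with torsion-free C^∞ Christoffel symbols Γ^λ_{μν} : Ω → ℝ, let φ : W → Ω be a geodesic flow, let γ : I → Ω be a C^∞ curve on an open interval I, and let f(t,s) = φ(γ(t), γ'(t), s) be the ∇-tangent surface, defined on a neighborhood of (t₀,0) in I × ℝ. If (∇γ)(t₀), (∇²γ)(t₀), (∇³γ)(t₀) are linearly independent, then the germ of f at (t₀,0) is diffeomorphic to the cuspidal edge (u,w) ↦ (u, w², w³). -/

import Mathlib

open Set

noncomputable section

/-- `σ` is a `C^∞` diffeomorphism from the open set `U` onto its open image. -/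
def SmoothDiffeoOn {E F : Type*} [NormedAddCommGroup E] [NormedSpace ℝ E]
    [NormedAddCommGroup F] [NormedSpace ℝ F] (σ : E → F) (U : Set E) : Prop :=
  IsOpen U ∧ IsOpen (σ '' U) ∧ ContDiffOn ℝ (⊤ : ℕ∞) σ U ∧
    ∃ σinv : F → E, ContDiffOn ℝ (⊤ : ℕ∞) σinv (σ '' U) ∧ ∀ x ∈ U, σinv (σ x) = x

/-- The map-germ of `f` at `p` is diffeomorphic to the map-germ of `g` at `q`:
there are open neighborhoods `U ∋ p`, `V ∋ f p` and `C^∞` diffeomorphisms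
`σ` from `U` onto an open neighborhood of `q`, `τ` from `V` onto an open
neighborhood of `g q`, with `σ p = q`, `τ (f p) = g q`, `f(U) ⊆ V` and
`τ ∘ f = g ∘ σ` on `U`. -/
def GermDiffeomorphic {E F : Type*} [NormedAddCommGroup E] [NormedSpace ℝ E]
    [NormedAddCommGroup F] [NormedSpace ℝ F]
    (f : E → F) (p : E) (g : E → F) (q : E) : Prop :=
  ∃ (U : Set E) (V : Set F) (σ : E → E) (τ : F → F),
    SmoothDiffeoOn σ U ∧ SmoothDiffeoOn τ V ∧
    p ∈ U ∧ f p ∈ V ∧ σ p = q ∧ τ (f p) = g q ∧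
    (∀ x ∈ U, f x ∈ V) ∧ ∀ x ∈ U, τ (f x) = g (σ x)

/-- Iterated covariant derivative of a curve `γ` with respect to the Christoffel
symbols `Γ` (in local coordinates): `covDeriv Γ γ k` is `∇^{k+1} γ`, i.e.
`covDeriv Γ γ 0 = ∇γ = γ'` and
`(∇^{k+1}γ)^λ(t) = d/dt (∇^k γ)^λ(t) + Σ_{μ,ν} Γ^λ_{μν}(γ(t)) (γ^μ)'(t) (∇^k γ)^ν(t)`. -/
noncomputable def covDeriv {m : ℕ} (Γ : (Fin m → ℝ) → Fin m → Fin m → Fin m → ℝ)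
    (γ : ℝ → Fin m → ℝ) : ℕ → ℝ → Fin m → ℝ
  | 0 => deriv γ
  | k + 1 => fun t l =>
      deriv (fun u => covDeriv Γ γ k u l) t +
        ∑ μ, ∑ ν, Γ (γ t) l μ ν * deriv γ t μ * covDeriv Γ γ k t ν

/-- `φ : W → Ω` is a geodesic flow for the Christoffel symbols `Γ` on the open set
`Ω ⊆ ℝ^m`: `W ⊆ Ω × ℝ^m × ℝ` is an open neighborhood of `Ω × ℝ^m × {0}`, `φ` is `C^∞`
on `W`, and for each `(x, v)` the curve `s ↦ φ(x, v, s)` is a geodesic with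
`φ(x,v,0) = x` and `∂φ/∂s(x,v,0) = v`. -/
structure IsGeodesicFlow {m : ℕ} (Γ : (Fin m → ℝ) → Fin m → Fin m → Fin m → ℝ)
    (Ω : Set (Fin m → ℝ)) (W : Set ((Fin m → ℝ) × (Fin m → ℝ) × ℝ))
    (φ : (Fin m → ℝ) × (Fin m → ℝ) × ℝ → Fin m → ℝ) : Prop where
  isOpen_W : IsOpen W
  subset_fst : ∀ p ∈ W, p.1 ∈ Ω
  mem_zero : ∀ x ∈ Ω, ∀ v, (x, v, (0 : ℝ)) ∈ W
  smooth : ContDiffOn ℝ (⊤ : ℕ∞) φ W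
  mapsTo : ∀ p ∈ W, φ p ∈ Ω
  init_pos : ∀ x ∈ Ω, ∀ v, φ (x, v, 0) = x
  init_vel : ∀ x ∈ Ω, ∀ v, deriv (fun s => φ (x, v, s)) 0 = v
  geodesic : ∀ p ∈ W, ∀ l,
    deriv (deriv (fun s => φ (p.1, p.2.1, s) l)) p.2.2 +
      ∑ μ, ∑ ν, Γ (φ p) l μ ν * deriv (fun s => φ (p.1, p.2.1, s) μ) p.2.2 *
        deriv (fun s => φ (p.1, p.2.1, s) ν) p.2.2 = 0

/-!
In the coordinates `u = t + s` and `s`, Whitney's theorem on even functions writes the tangent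
surface as `P (u, s²) + s • R (u, s²)` with `P` and `R` smooth. The initial conditions of the flow
give `P (u, 0) = γ u` and `R (u, 0) = 0`; the geodesic equation and its first derivative along
`s = 0` then give `∇²γ = -2 • ∂₂P` and `∇³γ = 3 • ∂₂R`. By Hadamard's lemma
`R (u, y) = y • Q (u, y)`, so the surface is the image of `(u, s², s³)` under
`(a, b, c) ↦ P (a, b) + c • Q (a, b)`, whose derivative at `(t₀, 0, 0)` is injective by linear
independence of `∇γ`, `∇²γ`, `∇³γ`.

Whitney's theorem reduces by Fourier inversion to `cos (η w) = C (η² w²)` and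
`sin (η w) = -2 η w C' (η² w²)`, where `C` is smooth of temperate growth and `C (w²) = cos w`.
-/

open Filter Topology MeasureTheory

open scoped ContDiff FourierTransform Real SchwartzMap

section CosSqrt

theorem contDiff_ofScalarsSum {𝕜 E : Type*} [NontriviallyNormedField 𝕜] [CompleteSpace 𝕜]
    [NormedRing E] [NormedAlgebra 𝕜 E] [CompleteSpace E] {a : ℕ → 𝕜}
    (ha : (FormalMultilinearSeries.ofScalars E a).radius = ⊤) {n : WithTop ℕ∞} :
    ContDiff 𝕜 n (FormalMultilinearSeries.ofScalarsSum (E := E) a) := by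
  have h := (FormalMultilinearSeries.ofScalars E a).hasFPowerSeriesOnBall (by simp [ha])
  rw [ha] at h
  have h_univ := h.analyticOnNhd
  rw [Metric.eball_top] at h_univ
  exact contDiffOn_univ.1 h_univ.contDiffOn_of_completeSpace

theorem exists_contDiff_comp_sq_eq_cos :
    ∃ c : ℝ → ℝ, ContDiff ℝ ∞ c ∧ ∀ w, c (w ^ 2) = Real.cos w := by
  let a : ℕ → ℝ := fun n => (-1) ^ n / (2 * n).factorial
  have ha (n : ℕ) : ‖a n.succ‖ / ‖a n‖ = 1 / ((2 * n + 1) * (2 * n + 2)) := by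
    simp only [a, Nat.succ_eq_add_one, mul_add, mul_one, Nat.factorial_succ]
    have : ((2 * n).factorial : ℝ) ≠ 0 := by positivity
    simp only [Nat.cast_mul, Nat.cast_add, Nat.cast_ofNat, Nat.cast_one, norm_div, norm_pow,
      norm_neg, norm_one, one_pow, norm_mul, Real.norm_eq_abs, RCLike.norm_natCast]
    field_simp
    norm_cast
    ring
  have h_ratio : Tendsto (fun n => ‖a n.succ‖ / ‖a n‖) atTop (𝓝 0) := by
    simp_rw [ha]
    refine squeeze_zero (fun n => by positivity) (fun n => ?_)
      tendsto_one_div_add_atTop_nhds_zero_nat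
    gcongr
    nlinarith [n.cast_nonneg (α := ℝ)]
  refine ⟨FormalMultilinearSeries.ofScalarsSum a, contDiff_ofScalarsSum
    (FormalMultilinearSeries.ofScalars_radius_eq_top_of_tendsto _ _
      (.of_forall fun n => by simp only [a]; positivity) h_ratio), fun w => ?_⟩
  rw [FormalMultilinearSeries.ofScalarsSum_eq_tsum, ← (Real.hasSum_cos w).tsum_eq]
  refine tsum_congr fun n => ?_
  rw [smul_eq_mul, pow_mul, div_mul_eq_mul_div]

variable {c : ℝ → ℝ}

theorem sin_eq_mul_deriv_comp_sq (hc : Differentiable ℝ c) (hcos : ∀ w, c (w ^ 2) = Real.cos w)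
    (w : ℝ) : Real.sin w = w * (-2 * deriv c (w ^ 2)) := by
  have h_chain := (hc (w ^ 2)).hasDerivAt.comp w (hasDerivAt_pow 2 w)
  rw [show c ∘ (· ^ 2) = Real.cos from funext hcos] at h_chain
  have h_eq := h_chain.unique (Real.hasDerivAt_cos w)
  norm_num at h_eq
  linarith

theorem hasDerivAt_iteratedDeriv {F : Type*} [NormedAddCommGroup F] [NormedSpace ℝ F] {f : ℝ → F}
    (hf : ContDiff ℝ ∞ f) (k : ℕ) (y : ℝ) :
    HasDerivAt (iteratedDeriv k f) (iteratedDeriv (k + 1) f y) y := by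
  rw [iteratedDeriv_succ]
  exact (hf.differentiable_iteratedDeriv k (by exact_mod_cast WithTop.coe_lt_top _) y).hasDerivAt

theorem ode_of_comp_sq_eq_cos (hc : ContDiff ℝ ∞ c) (hcos : ∀ w, c (w ^ 2) = Real.cos w) (w : ℝ) :
    4 * w ^ 2 * iteratedDeriv 2 c (w ^ 2) + 2 * iteratedDeriv 1 c (w ^ 2) + c (w ^ 2) = 0 := by
  have h_sin (x : ℝ) : x * (-2 * iteratedDeriv 1 c (x ^ 2)) = Real.sin x := by
    rw [iteratedDeriv_one, ← sin_eq_mul_deriv_comp_sq (hc.differentiable (by simp)) hcos]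
  have h_prod := (hasDerivAt_id w).mul
    (((hasDerivAt_iteratedDeriv hc 1 (w ^ 2)).comp w (hasDerivAt_pow 2 w)).const_mul (-2))
  have h_eq := h_prod.unique ((Real.hasDerivAt_sin w).congr_of_eventuallyEq (.of_forall h_sin))
  norm_num at h_eq
  rw [hcos, iteratedDeriv_one]
  linear_combination -h_eq

theorem iteratedDeriv_ode_of_comp_sq_eq_cos (hc : ContDiff ℝ ∞ c)
    (hcos : ∀ w, c (w ^ 2) = Real.cos w) (k : ℕ) {y : ℝ} (hy : 0 < y) :
    4 * y * iteratedDeriv (k + 2) c y + (2 + 4 * k) * iteratedDeriv (k + 1) c y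
      + iteratedDeriv k c y = 0 := by
  induction k generalizing y with
  | zero => simpa [Real.sq_sqrt hy.le] using ode_of_comp_sq_eq_cos hc hcos (√y)
  | succ k ih =>
    have h_deriv := ((((hasDerivAt_id y).const_mul 4).mul
      (hasDerivAt_iteratedDeriv hc (k + 2) y)).add
      ((hasDerivAt_iteratedDeriv hc (k + 1) y).const_mul (2 + 4 * (k : ℝ)))).add
      (hasDerivAt_iteratedDeriv hc k y)
    have h_eq := h_deriv.unique ((hasDerivAt_const y (0 : ℝ)).congr_of_eventuallyEq <| by
      filter_upwards [lt_mem_nhds hy] with z hz using by simpa using ih hz)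
    simp only [id_eq, mul_one] at h_eq
    push_cast
    linear_combination h_eq

theorem exists_bound_iteratedDeriv_of_comp_sq_eq_cos (hc : ContDiff ℝ ∞ c)
    (hcos : ∀ w, c (w ^ 2) = Real.cos w) (k : ℕ) :
    ∃ M, ∀ y ≥ 1, ‖iteratedDeriv k c y‖ ≤ M := by
  induction k using Nat.twoStepInduction with
  | zero =>
    refine ⟨1, fun y hy => ?_⟩
    rw [iteratedDeriv_zero, ← Real.sq_sqrt (zero_le_one.trans hy), hcos]
    exact Real.abs_cos_le_one _
  | one =>
    refine ⟨1, fun y hy => ?_⟩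
    have h_sin := sin_eq_mul_deriv_comp_sq (hc.differentiable (by simp)) hcos (√y)
    rw [Real.sq_sqrt (zero_le_one.trans hy)] at h_sin
    have h_le := Real.abs_sin_le_one (√y)
    rw [h_sin, abs_mul, abs_mul, abs_of_nonneg (Real.sqrt_nonneg y)] at h_le
    rw [iteratedDeriv_one, Real.norm_eq_abs]
    norm_num at h_le
    nlinarith [abs_nonneg (deriv c y), Real.one_le_sqrt.2 hy]
  | more k ih₀ ih₁ =>
    obtain ⟨M, hM⟩ := ih₀
    obtain ⟨N, hN⟩ := ih₁
    refine ⟨(2 + 4 * k) * N + M, fun y hy => ?_⟩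
    have h_ode := iteratedDeriv_ode_of_comp_sq_eq_cos hc hcos k (zero_lt_one.trans_le hy)
    calc ‖iteratedDeriv (k + 2) c y‖ ≤ 4 * y * ‖iteratedDeriv (k + 2) c y‖ :=
          le_mul_of_one_le_left (norm_nonneg _) (by linarith)
      _ = ‖4 * y * iteratedDeriv (k + 2) c y‖ := by
          rw [norm_mul, Real.norm_of_nonneg (by linarith : 0 ≤ 4 * y)]
      _ = ‖(2 + 4 * k) * iteratedDeriv (k + 1) c y + iteratedDeriv k c y‖ := by
          rw [eq_neg_of_add_eq_zero_left ((add_assoc _ _ _).symm.trans h_ode), norm_neg]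
      _ ≤ (2 + 4 * k) * ‖iteratedDeriv (k + 1) c y‖ + ‖iteratedDeriv k c y‖ :=
          (norm_add_le _ _).trans_eq (by rw [norm_mul, Real.norm_of_nonneg (by positivity)])
      _ ≤ (2 + 4 * k) * N + M := by gcongr; exacts [hN y hy, hM y hy]

end CosSqrt

section TemperateGrowth

variable {F : Type*} [NormedAddCommGroup F] [NormedSpace ℝ F] {f : ℝ → F}

theorem hasTemperateGrowth_of_bounded_iteratedDeriv (hf : ContDiff ℝ ∞ f)
    (hb : ∀ k, ∃ M, ∀ y, ‖iteratedDeriv k f y‖ ≤ M) : f.HasTemperateGrowth := by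
  refine ⟨hf, fun k => ?_⟩
  obtain ⟨M, hM⟩ := hb k
  exact ⟨0, M, fun y => by simpa [norm_iteratedFDeriv_eq_norm_iteratedDeriv] using hM y⟩

theorem hasTemperateGrowth_deriv (hf : f.HasTemperateGrowth) : (deriv f).HasTemperateGrowth := by
  refine ⟨(contDiff_infty_iff_deriv.1 hf.1).2, fun n => ?_⟩
  obtain ⟨k, C, hC⟩ := hf.2 (n + 1)
  refine ⟨k, C, fun x => ?_⟩
  simpa only [norm_iteratedFDeriv_eq_norm_iteratedDeriv, iteratedDeriv_succ'] using hC x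

theorem hasTemperateGrowth_cexp_mul_I :
    (fun x : ℝ => Complex.exp (x * Complex.I)).HasTemperateGrowth := by
  have h_iter (k : ℕ) : iteratedDeriv k (fun x : ℝ => Complex.exp (x * Complex.I)) =
      fun x : ℝ => Complex.exp (x * Complex.I) * Complex.I ^ k := by
    induction k with
    | zero => simp
    | succ k ih =>
      ext x
      have h_inner : HasDerivAt (fun x : ℝ => x * Complex.I) Complex.I x := by
        simpa using Complex.ofRealCLM.hasDerivAt.mul_const Complex.I
      rw [iteratedDeriv_succ, ih, (h_inner.cexp.mul_const (Complex.I ^ k)).deriv]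
      ring
  exact hasTemperateGrowth_of_bounded_iteratedDeriv
    (Complex.ofRealCLM.contDiff.mul contDiff_const).cexp fun k =>
      ⟨1, fun x => by simp [h_iter, Complex.norm_exp_ofReal_mul_I]⟩

theorem exists_hasTemperateGrowth_eqOn_Ici_zero (hf : ContDiff ℝ ∞ f)
    (hb : ∀ k, ∃ M, ∀ y ≥ 1, ‖iteratedDeriv k f y‖ ≤ M) :
    ∃ g : ℝ → F, g.HasTemperateGrowth ∧ EqOn g f (Ici 0) := by
  let g : ℝ → F := fun y => Real.smoothTransition (y + 1) • f y
  have hg : ContDiff ℝ ∞ g := (Real.smoothTransition.contDiff.comp (by fun_prop)).smul hf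
  have hgf {y : ℝ} (hy : 0 ≤ y) : g y = f y := by
    simp only [g, Real.smoothTransition.one_of_one_le (by linarith : 1 ≤ y + 1), one_smul]
  have hg_neg {y : ℝ} (hy : y ≤ -1) : g y = 0 := by
    simp only [g, Real.smoothTransition.zero_of_nonpos (by linarith : y + 1 ≤ 0), zero_smul]
  refine ⟨g, hasTemperateGrowth_of_bounded_iteratedDeriv hg fun k => ?_, fun y hy => hgf hy⟩
  obtain ⟨M, hM⟩ := hb k
  obtain ⟨N, hN⟩ := (isCompact_Icc (a := (-1 : ℝ)) (b := 1)).exists_bound_of_continuousOn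
    (hg.continuous_iteratedDeriv k (by exact_mod_cast le_top)).continuousOn
  refine ⟨max 0 (max M N), fun y => ?_⟩
  rcases lt_or_ge y (-1) with hy | hy
  · have : g =ᶠ[𝓝 y] fun _ => 0 := by
      filter_upwards [gt_mem_nhds hy] with z hz using hg_neg hz.le
    simp [this.iteratedDeriv_eq k]
  rcases le_or_gt y 1 with hy₁ | hy₁
  · exact (hN y ⟨hy, hy₁⟩).trans (by simp)
  · have : g =ᶠ[𝓝 y] f := by
      filter_upwards [lt_mem_nhds hy₁] with z hz using hgf (zero_le_one.trans hz.le)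
    rw [this.iteratedDeriv_eq k]
    exact (hM y hy₁.le).trans (by simp)

theorem exists_hasTemperateGrowth_comp_sq_eq_cos :
    ∃ c : ℝ → ℝ, c.HasTemperateGrowth ∧ ∀ w, c (w ^ 2) = Real.cos w := by
  obtain ⟨c, hc, hcos⟩ := exists_contDiff_comp_sq_eq_cos
  obtain ⟨g, hg, hgc⟩ := exists_hasTemperateGrowth_eqOn_Ici_zero hc
    (exists_bound_iteratedDeriv_of_comp_sq_eq_cos hc hcos)
  exact ⟨g, hg, fun w => (hgc (sq_nonneg w)).trans (hcos w)⟩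

end TemperateGrowth

section ParametricIntegral

variable {P X F : Type*} [NormedAddCommGroup P] [NormedSpace ℝ P]
  [NormedAddCommGroup F] [NormedSpace ℝ F]

/-- A family of smooth functions `H · ξ` all of whose derivatives are, locally uniformly in the
parameter, dominated by integrable functions of `ξ`; this is what differentiating
`p ↦ ∫ ξ, H p ξ ∂μ` under the integral sign to all orders requires. -/
structure HasDominatedDerivs [MeasurableSpace X] (μ : Measure X) (H : P → X → F) : Prop where
  contDiff : ∀ ξ, ContDiff ℝ ∞ (H · ξ)
  aestronglyMeasurable : ∀ n p,
    AEStronglyMeasurable (fun ξ => iteratedFDeriv ℝ n (H · ξ) p) μ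
  dominated : ∀ n p₀, ∃ s ∈ 𝓝 p₀, ∃ b : X → ℝ, Integrable b μ ∧
    ∀ᵐ ξ ∂μ, ∀ p ∈ s, ‖iteratedFDeriv ℝ n (H · ξ) p‖ ≤ b ξ

namespace HasDominatedDerivs

variable [MeasurableSpace X] {μ : Measure X} {H : P → X → F}

theorem aestronglyMeasurable_apply (h : HasDominatedDerivs μ H) (p : P) :
    AEStronglyMeasurable (H p) μ :=
  (continuousMultilinearCurryFin0 ℝ P F).continuous.comp_aestronglyMeasurable
    (h.aestronglyMeasurable 0 p)

theorem integrable (h : HasDominatedDerivs μ H) (p : P) : Integrable (H p) μ := by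
  obtain ⟨s, hs, b, hb, hHb⟩ := h.dominated 0 p
  refine hb.mono' (h.aestronglyMeasurable_apply p) ?_
  filter_upwards [hHb] with ξ hξ
  simpa using hξ p (mem_of_mem_nhds hs)

theorem fderiv (h : HasDominatedDerivs μ H) :
    HasDominatedDerivs μ (fun p ξ => fderiv ℝ (H · ξ) p) where
  contDiff ξ := (contDiff_infty_iff_fderiv.1 (h.contDiff ξ)).2
  aestronglyMeasurable n p := by
    have h_curry := (continuousMultilinearCurryRightEquiv' ℝ n P F).continuous
    simpa [iteratedFDeriv_succ_eq_comp_right] using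
      h_curry.comp_aestronglyMeasurable (h.aestronglyMeasurable (n + 1) p)
  dominated n p₀ := by
    simpa only [norm_iteratedFDeriv_fderiv] using h.dominated (n + 1) p₀

theorem hasFDerivAt (h : HasDominatedDerivs μ H) (p : P) :
    HasFDerivAt (fun p => ∫ ξ, H p ξ ∂μ) (∫ ξ, _root_.fderiv ℝ (H · ξ) p ∂μ) p := by
  obtain ⟨s, hs, b, hb, hHb⟩ := h.fderiv.dominated 0 p
  refine hasFDerivAt_integral_of_dominated_of_fderiv_le
    (F' := fun p ξ => _root_.fderiv ℝ (H · ξ) p) hs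
    (.of_forall h.aestronglyMeasurable_apply) (h.integrable p)
    (h.fderiv.aestronglyMeasurable_apply p) ?_ hb ?_
  · filter_upwards [hHb] with ξ hξ q hq using by simpa using hξ q hq
  · exact .of_forall fun ξ q _ => ((h.contDiff ξ).differentiable (by simp) q).hasFDerivAt

end HasDominatedDerivs

-- `P` and `F` share a universe because the induction passes from `F` to `P →L[ℝ] F`.
theorem HasDominatedDerivs.contDiff_nat_integral.{u, v} {P : Type u} {X : Type v}
    [NormedAddCommGroup P] [NormedSpace ℝ P] [MeasurableSpace X] {μ : Measure X} (n : ℕ)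
    {F : Type u} [NormedAddCommGroup F] [NormedSpace ℝ F] {H : P → X → F}
    (h : HasDominatedDerivs μ H) : ContDiff ℝ n (fun p => ∫ ξ, H p ξ ∂μ) := by
  induction n generalizing F with
  | zero =>
    exact contDiff_zero.2 (continuous_iff_continuousAt.2 fun p => (h.hasFDerivAt p).continuousAt)
  | succ n ih =>
    exact_mod_cast contDiff_succ_iff_hasFDerivAt.2 ⟨_, ih h.fderiv, h.hasFDerivAt⟩

theorem iteratedFDeriv_prodMk_right [NormedAddCommGroup X] [NormedSpace ℝ X]
    {T : P × X → F} (hT : ContDiff ℝ ∞ T) (n : ℕ) (p : P) (ξ : X) :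
    iteratedFDeriv ℝ n (fun p => T (p, ξ)) p = (iteratedFDeriv ℝ n T (p, ξ)).compContinuousLinearMap
      fun _ => ContinuousLinearMap.inl ℝ P X := by
  have h_shift := (ContinuousLinearMap.inl ℝ P X).iteratedFDeriv_comp_right
    (f := fun z => T (z + (0, ξ))) (hT.comp (by fun_prop)) p (i := n) (by exact_mod_cast le_top)
  rw [iteratedFDeriv_comp_add_right] at h_shift
  simpa [Function.comp_def] using h_shift

theorem norm_iteratedFDeriv_prodMk_right_le [NormedAddCommGroup X] [NormedSpace ℝ X]
    {T : P × X → F} (hT : ContDiff ℝ ∞ T) (n : ℕ) (p : P) (ξ : X) :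
    ‖iteratedFDeriv ℝ n (fun p => T (p, ξ)) p‖ ≤ ‖iteratedFDeriv ℝ n T (p, ξ)‖ := by
  rw [iteratedFDeriv_prodMk_right hT]
  refine (ContinuousMultilinearMap.norm_compContinuousLinearMap_le _ _).trans ?_
  refine mul_le_of_le_one_right (norm_nonneg _) (Finset.prod_le_one (fun _ _ => norm_nonneg _)
    fun _ _ => ContinuousLinearMap.norm_inl_le_one ℝ P X)

theorem continuous_iteratedFDeriv_prodMk_right [NormedAddCommGroup X] [NormedSpace ℝ X]
    {T : P × X → F} (hT : ContDiff ℝ ∞ T) (n : ℕ) :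
    Continuous fun z : P × X => iteratedFDeriv ℝ n (fun p => T (p, z.2)) z.1 := by
  simp_rw [iteratedFDeriv_prodMk_right hT]
  exact (ContinuousMultilinearMap.compContinuousLinearMapL
    fun _ : Fin n => ContinuousLinearMap.inl ℝ P X).continuous.comp
    (hT.continuous_iteratedFDeriv (by exact_mod_cast le_top))

variable [NormedAddCommGroup X] [NormedSpace ℝ X] [MeasurableSpace X] [BorelSpace X]
  {μ : Measure X}

theorem HasDominatedDerivs.smul_schwartzMap [SecondCountableTopology X] [μ.HasTemperateGrowth]
    [NormedSpace ℂ F] {T : P × X → ℂ} (hT : T.HasTemperateGrowth) (g : 𝓢(X, F)) :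
    HasDominatedDerivs μ fun p ξ => T (p, ξ) • g ξ where
  contDiff ξ := (hT.1.comp (contDiff_prodMk_left ξ)).smul contDiff_const
  aestronglyMeasurable n p :=
    ((continuous_iteratedFDeriv_prodMk_right (T := fun z : P × X => T z • g z.2)
      (hT.1.smul ((g.smooth ⊤).comp contDiff_snd)) n).comp
      (Continuous.prodMk_right p)).aestronglyMeasurable
  dominated n p₀ := by
    obtain ⟨k, C, hC, hTC⟩ := hT.norm_iteratedFDeriv_le_uniform n
    refine ⟨Metric.ball p₀ 1, Metric.ball_mem_nhds p₀ one_pos,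
      fun ξ => C * (2 ^ (k - 1) * ((‖p₀‖ + 2) ^ k * ‖g ξ‖ + ‖ξ‖ ^ k * ‖g ξ‖)),
      (((g.integrable.norm.const_mul _).add (g.integrable_pow_mul μ k)).const_mul _).const_mul _,
      .of_forall fun ξ p hp => ?_⟩
    have h_norm : 1 + ‖(p, ξ)‖ ≤ (‖p₀‖ + 2) + ‖ξ‖ := by
      have := norm_le_norm_add_norm_sub' p p₀
      have := mem_ball_iff_norm.1 hp
      grind [Prod.norm_mk, norm_nonneg ξ, norm_nonneg p₀]
    let L : ℂ →L[ℝ] F := (ContinuousLinearMap.toSpanSingleton ℂ (g ξ)).restrictScalars ℝ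
    calc ‖iteratedFDeriv ℝ n (fun p => T (p, ξ) • g ξ) p‖
        ≤ ‖L‖ * ‖iteratedFDeriv ℝ n (fun p => T (p, ξ)) p‖ :=
          L.norm_iteratedFDeriv_comp_left (N := ∞)
            (hT.1.comp (contDiff_prodMk_left ξ)).contDiffAt (by exact_mod_cast le_top)
      _ ≤ ‖g ξ‖ * (C * (1 + ‖(p, ξ)‖) ^ k) := by
          gcongr
          · simp [L]
          · exact (norm_iteratedFDeriv_prodMk_right_le hT.1 n p ξ).trans (hTC n le_rfl _)
      _ ≤ ‖g ξ‖ * (C * (2 ^ (k - 1) * ((‖p₀‖ + 2) ^ k + ‖ξ‖ ^ k))) := by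
          gcongr
          exact (pow_le_pow_left₀ (by positivity) h_norm k).trans
            (add_pow_le (by positivity) (norm_nonneg ξ) k)
      _ = _ := by ring

theorem HasDominatedDerivs.restrict_isCompact [IsFiniteMeasureOnCompacts μ] {T : P × X → F}
    (hT : ContDiff ℝ ∞ T) {K : Set X} (hK : IsCompact K) :
    HasDominatedDerivs (μ.restrict K) fun p ξ => T (p, ξ) where
  contDiff ξ := hT.comp (contDiff_prodMk_left ξ)
  aestronglyMeasurable n p :=
    ((continuous_iteratedFDeriv_prodMk_right hT n).comp
      (Continuous.prodMk_right p)).continuousOn.aestronglyMeasurable_of_isCompact hK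
        hK.measurableSet
  dominated n p₀ := by
    have h_cont := (continuous_iteratedFDeriv_prodMk_right hT n).norm
    obtain ⟨N, hN⟩ := hK.exists_bound_of_continuousOn
      (h_cont.comp (Continuous.prodMk_right p₀)).continuousOn
    have h_near : ∀ᶠ p in 𝓝 p₀, ∀ ξ ∈ K, ‖iteratedFDeriv ℝ n (fun p => T (p, ξ)) p‖ < N + 1 := by
      refine hK.eventually_forall_of_forall_eventually fun ξ hξ =>
        h_cont.continuousAt.eventually_lt_const ?_
      exact (le_abs_self _).trans_lt ((hN ξ hξ).trans_lt (lt_add_one N))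
    refine ⟨_, h_near, fun _ => N + 1, ?_, ?_⟩
    · have := isFiniteMeasure_restrict.2 (hK.measure_ne_top (μ := μ))
      exact integrable_const _
    · filter_upwards [ae_restrict_mem hK.measurableSet] with ξ hξ p hp using (hp ξ hξ).le

end ParametricIntegral

section EvenOddDecomposition

theorem exists_contDiff_eq_add_smul.{u} {V F : Type u} [NormedAddCommGroup V] [NormedSpace ℝ V]
    [NormedAddCommGroup F] [NormedSpace ℝ F] [CompleteSpace F] {K : V × ℝ → F}
    (hK : ContDiff ℝ ∞ K) :
    ∃ A : V × ℝ → F, ContDiff ℝ ∞ A ∧ ∀ u y, K (u, y) = K (u, 0) + y • A (u, y) := by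
  let T : (V × ℝ) × ℝ → F := fun z => fderiv ℝ K (z.1.1, z.2 * z.1.2) (0, 1)
  have hT : ContDiff ℝ ∞ T :=
    ((contDiff_infty_iff_fderiv.1 hK).2.comp (by fun_prop)).clm_apply contDiff_const
  refine ⟨fun p => ∫ t in Icc (0 : ℝ) 1, T (p, t),
    contDiff_infty.2 (HasDominatedDerivs.restrict_isCompact hT isCompact_Icc).contDiff_nat_integral,
    fun u y => ?_⟩
  have h_deriv (t : ℝ) :
      HasDerivAt (fun t : ℝ => K (u, t * y)) (y • fderiv ℝ K (u, t * y) (0, 1)) t := by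
    have h_line : HasDerivAt (fun t : ℝ => (u, t * y)) (0, y) t := by
      simpa using (hasDerivAt_const t u).prodMk ((hasDerivAt_id t).mul_const y)
    rw [← map_smul, Prod.smul_mk, smul_zero, smul_eq_mul, mul_one]
    exact (hK.differentiable (by simp) (u, t * y)).hasFDerivAt.comp_hasDerivAt t h_line
  have h_ftc := intervalIntegral.integral_eq_sub_of_hasDerivAt (fun t _ => h_deriv t)
    ((hT.continuous.comp (Continuous.prodMk_right (u, y))).const_smul y |>.intervalIntegrable
      0 1)
  rw [intervalIntegral.integral_smul, intervalIntegral.integral_of_le zero_le_one,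
    ← integral_Icc_eq_integral_Ioc] at h_ftc
  rw [h_ftc]
  simp

variable {V : Type*} [NormedAddCommGroup V] [InnerProductSpace ℝ V]

/-- The Fourier kernel `exp (2πi⟨ξ, (u, w)⟩)` on `V × ℝ` with its dependence on `w` replaced by
`a (η, y)`, where `η` is `2π` times the last coordinate of `ξ` and `y` stands for `w ^ 2`. -/
def fourierKernelWith (a : ℝ × ℝ → ℂ) (z : (V × ℝ) × WithLp 2 (V × ℝ)) : ℂ :=
  Complex.exp ((2 * π * inner ℝ z.2.fst z.1.1 : ℝ) * Complex.I) * a (2 * π * z.2.snd, z.1.2)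

theorem hasTemperateGrowth_fourierKernelWith {a : ℝ × ℝ → ℂ} (ha : a.HasTemperateGrowth) :
    (fourierKernelWith (V := V) a).HasTemperateGrowth := by
  have h_dual := (ContinuousLinearMap.snd ℝ (V × ℝ) (WithLp 2 (V × ℝ))).hasTemperateGrowth
  have h_fst := (WithLp.fstL 2 ℝ V ℝ).hasTemperateGrowth.comp h_dual
  have h_snd := (WithLp.sndL 2 ℝ V ℝ).hasTemperateGrowth.comp h_dual
  have h_param := (ContinuousLinearMap.fst ℝ (V × ℝ) (WithLp 2 (V × ℝ))).hasTemperateGrowth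
  have h_inner := (innerSL ℝ (E := V)).bilinear_hasTemperateGrowth h_fst
    ((ContinuousLinearMap.fst ℝ V ℝ).hasTemperateGrowth.comp h_param)
  have h_exp := hasTemperateGrowth_cexp_mul_I.comp
    ((Function.HasTemperateGrowth.const (2 * π)).mul h_inner)
  have h_pair := ((ContinuousLinearMap.inl ℝ ℝ ℝ).hasTemperateGrowth.comp
    ((Function.HasTemperateGrowth.const (2 * π)).mul h_snd)).add
    ((ContinuousLinearMap.inr ℝ ℝ ℝ ∘L ContinuousLinearMap.snd ℝ V ℝ).hasTemperateGrowth.comp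
      h_param)
  refine h_exp.mul ?_
  simpa [Function.comp_def] using ha.comp h_pair

theorem hasTemperateGrowth_comp_sq_mul {c : ℝ → ℝ} (hc : c.HasTemperateGrowth) :
    (fun q : ℝ × ℝ => (c (q.1 ^ 2 * q.2) : ℂ)).HasTemperateGrowth := by
  have h_fst := (ContinuousLinearMap.fst ℝ ℝ ℝ).hasTemperateGrowth
  have h_snd := (ContinuousLinearMap.snd ℝ ℝ ℝ).hasTemperateGrowth
  exact Complex.ofRealCLM.hasTemperateGrowth.comp (hc.comp ((h_fst.pow 2).mul h_snd))

theorem cexp_inner_eq_fourierKernelWith {c : ℝ → ℝ} (hc : Differentiable ℝ c)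
    (hcos : ∀ w, c (w ^ 2) = Real.cos w) (ξ : WithLp 2 (V × ℝ)) (u : V) (w : ℝ) :
    Complex.exp ((2 * π * inner ℝ ξ (WithLp.toLp 2 (u, w)) : ℝ) * Complex.I) =
      fourierKernelWith (fun q => c (q.1 ^ 2 * q.2)) ((u, w ^ 2), ξ) +
        w * fourierKernelWith (fun q => q.1 * deriv c (q.1 ^ 2 * q.2) * (-2 * Complex.I))
          ((u, w ^ 2), ξ) := by
  have h_phase : ((2 * π * inner ℝ ξ (WithLp.toLp 2 (u, w)) : ℝ) : ℂ) * Complex.I =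
      (2 * π * inner ℝ ξ.fst u : ℝ) * Complex.I + (2 * π * ξ.snd * w : ℝ) * Complex.I := by
    simp only [WithLp.prod_inner_apply, RCLike.inner_apply, conj_trivial, WithLp.ofLp_fst,
      WithLp.ofLp_snd]
    push_cast
    ring
  rw [h_phase, Complex.exp_add, Complex.exp_mul_I (2 * π * ξ.snd * w : ℝ), ← Complex.ofReal_cos,
    ← Complex.ofReal_sin, ← hcos, sin_eq_mul_deriv_comp_sq hc hcos]
  simp only [fourierKernelWith, mul_pow]
  push_cast
  ring

theorem exists_even_odd_of_schwartzMap.{u} {V F : Type u} [NormedAddCommGroup V]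
    [InnerProductSpace ℝ V] [FiniteDimensional ℝ V] [NormedAddCommGroup F] [NormedSpace ℂ F]
    [CompleteSpace F] (g : 𝓢(WithLp 2 (V × ℝ), F)) :
    ∃ P R : V × ℝ → F, ContDiff ℝ ∞ P ∧ ContDiff ℝ ∞ R ∧
      ∀ u w, g (WithLp.toLp 2 (u, w)) = P (u, w ^ 2) + w • R (u, w ^ 2) := by
  borelize V
  obtain ⟨c, hc, hcos⟩ := exists_hasTemperateGrowth_comp_sq_eq_cos
  have h_even := HasDominatedDerivs.smul_schwartzMap (μ := volume)
    (hasTemperateGrowth_fourierKernelWith (V := V) (hasTemperateGrowth_comp_sq_mul hc)) (𝓕 g)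
  have h_odd_factor : (fun q : ℝ × ℝ =>
      q.1 * deriv c (q.1 ^ 2 * q.2) * (-2 * Complex.I)).HasTemperateGrowth :=
    ((Complex.ofRealCLM ∘L ContinuousLinearMap.fst ℝ ℝ ℝ).hasTemperateGrowth.mul
      (hasTemperateGrowth_comp_sq_mul (hasTemperateGrowth_deriv hc))).mul (.const _)
  have h_odd := HasDominatedDerivs.smul_schwartzMap (μ := volume)
    (hasTemperateGrowth_fourierKernelWith (V := V) h_odd_factor) (𝓕 g)
  refine ⟨_, _, contDiff_infty.2 h_even.contDiff_nat_integral,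
    contDiff_infty.2 h_odd.contDiff_nat_integral, fun u w => ?_⟩
  have h_inv : g (WithLp.toLp 2 (u, w)) = (𝓕⁻ (𝓕 g)) (WithLp.toLp 2 (u, w)) := by
    rw [FourierTransform.fourierInv_fourier_eq]
  rw [h_inv, SchwartzMap.fourierInv_coe, Real.fourierInv_eq', ← integral_smul]
  refine Eq.trans (integral_congr_ae (.of_forall fun ξ => ?_))
    (integral_add (h_even.integrable (u, w ^ 2)) ((h_odd.integrable (u, w ^ 2)).smul w))
  dsimp only
  rw [cexp_inner_eq_fourierKernelWith (hc.1.differentiable (by simp)) hcos, add_smul, mul_smul,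
    Complex.coe_smul]

theorem exists_even_odd_of_hasCompactSupport.{u} {V ι : Type u} [Fintype ι] [NormedAddCommGroup V]
    [InnerProductSpace ℝ V] [FiniteDimensional ℝ V] {G : V × ℝ → ι → ℝ} (hG : ContDiff ℝ ∞ G)
    (hGc : HasCompactSupport G) :
    ∃ P R : V × ℝ → ι → ℝ, ContDiff ℝ ∞ P ∧ ContDiff ℝ ∞ R ∧
      ∀ u w, G (u, w) = P (u, w ^ 2) + w • R (u, w ^ 2) := by
  let complexify : (ι → ℝ) →L[ℝ] (ι → ℂ) := .piMap fun _ => Complex.ofRealCLM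
  let realPart : (ι → ℂ) →L[ℝ] (ι → ℝ) := .piMap fun _ => Complex.reCLM
  let toProd := WithLp.prodContinuousLinearEquiv 2 ℝ V ℝ
  have h_comp : HasCompactSupport (complexify ∘ G ∘ toProd) :=
    (hGc.comp_homeomorph toProd.toHomeomorph).comp_left (map_zero _)
  obtain ⟨P, R, hP, hR, h_eq⟩ := exists_even_odd_of_schwartzMap
    (h_comp.toSchwartzMap (complexify.contDiff.comp (hG.comp toProd.contDiff)))
  refine ⟨realPart ∘ P, realPart ∘ R, realPart.contDiff.comp hP, realPart.contDiff.comp hR,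
    fun u w => ?_⟩
  have h_left (v : ι → ℝ) : realPart (complexify v) = v := by
    ext
    simp [realPart, complexify]
  simpa [toProd, h_left] using congrArg realPart (h_eq u w)

theorem exists_contDiff_hasCompactSupport_eventuallyEq {E F : Type*} [NormedAddCommGroup E]
    [NormedSpace ℝ E] [FiniteDimensional ℝ E] [NormedAddCommGroup F] [NormedSpace ℝ F] {f : E → F}
    {x₀ : E} (hf : ∀ᶠ x in 𝓝 x₀, ContDiffAt ℝ ∞ f x) :
    ∃ g : E → F, ContDiff ℝ ∞ g ∧ HasCompactSupport g ∧ g =ᶠ[𝓝 x₀] f := by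
  obtain ⟨r, hr, hfr⟩ := Metric.nhds_basis_closedBall.mem_iff.1 hf
  let χ : ContDiffBump x₀ := ⟨r / 2, r, half_pos hr, half_lt_self hr⟩
  have h_supp : tsupport (fun x => χ x • f x) ⊆ Metric.closedBall x₀ r :=
    (tsupport_smul_subset_left χ f).trans χ.tsupport_eq.subset
  refine ⟨fun x => χ x • f x, contDiff_iff_contDiffAt.2 fun x => ?_,
    (isCompact_closedBall x₀ r).of_isClosed_subset (isClosed_tsupport _) h_supp, ?_⟩
  · by_cases hx : x ∈ tsupport (fun x => χ x • f x)
    · exact χ.contDiffAt.smul (hfr (h_supp hx))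
    · exact contDiffAt_const.congr_of_eventuallyEq (notMem_tsupport_iff_eventuallyEq.1 hx)
  · filter_upwards [χ.eventuallyEq_one] with x hx
    simp [hx]

theorem exists_even_odd_eventually.{u} {V ι : Type u} [Fintype ι] [NormedAddCommGroup V]
    [InnerProductSpace ℝ V] [FiniteDimensional ℝ V] {f : V × ℝ → ι → ℝ} {p₀ : V × ℝ}
    (hf : ∀ᶠ p in 𝓝 p₀, ContDiffAt ℝ ∞ f p) :
    ∃ P R : V × ℝ → ι → ℝ, ContDiff ℝ ∞ P ∧ ContDiff ℝ ∞ R ∧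
      ∀ᶠ p in 𝓝 p₀, f p = P (p.1, p.2 ^ 2) + p.2 • R (p.1, p.2 ^ 2) := by
  obtain ⟨G, hG, hGc, hGf⟩ := exists_contDiff_hasCompactSupport_eventuallyEq hf
  obtain ⟨P, R, hP, hR, h_eq⟩ := exists_even_odd_of_hasCompactSupport hG hGc
  exact ⟨P, R, hP, hR, hGf.mono fun p hp => hp.symm.trans (h_eq p.1 p.2)⟩

end EvenOddDecomposition

section EvenOddForm

variable {F : Type*} [NormedAddCommGroup F] [NormedSpace ℝ F] {H : ℝ × ℝ → F × F} {t₀ : ℝ}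

/-- The surface `(t, s) ↦ P (t + s, s²) + s R (t + s, s²)`, where `H = (P, R)`. -/
def evenOddForm (H : ℝ × ℝ → F × F) (p : ℝ × ℝ) : F :=
  (H (p.1 + p.2, p.2 ^ 2)).1 + p.2 • (H (p.1 + p.2, p.2 ^ 2)).2

/-- The coefficients of the `s`-derivative of `evenOddForm H`, which is again of even-odd form:
in terms of `H = (P, R)` they are `P_u + R + 2 y R_y` and `2 P_y + R_u`. -/
def evenOddDeriv (H : ℝ × ℝ → F × F) (z : ℝ × ℝ) : F × F :=
  ((fderiv ℝ H z (1, 0)).1 + (H z).2 + (2 * z.2) • (fderiv ℝ H z (0, 1)).2,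
    (2 : ℝ) • (fderiv ℝ H z (0, 1)).1 + (fderiv ℝ H z (1, 0)).2)

@[simp]
theorem evenOddForm_zero (t : ℝ) : evenOddForm H (t, 0) = (H (t, 0)).1 := by
  simp [evenOddForm]

theorem contDiff_fderiv_apply {E G : Type*} [NormedAddCommGroup E] [NormedSpace ℝ E]
    [NormedAddCommGroup G] [NormedSpace ℝ G] {f : E → G} (hf : ContDiff ℝ ∞ f) (v : E) :
    ContDiff ℝ ∞ fun x => fderiv ℝ f x v :=
  (contDiff_infty_iff_fderiv.1 hf).2.clm_apply contDiff_const

theorem contDiff_evenOddDeriv (hH : ContDiff ℝ ∞ H) : ContDiff ℝ ∞ (evenOddDeriv H) := by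
  have h_fst := contDiff_fderiv_apply hH (1, 0)
  have h_snd := contDiff_fderiv_apply hH (0, 1)
  exact ((h_fst.fst.add hH.snd).add ((contDiff_const.mul contDiff_snd).smul h_snd.snd)).prodMk
    ((h_snd.fst.const_smul (2 : ℝ)).add h_fst.snd)

theorem hasDerivAt_prod_iff {E G : Type*} [NormedAddCommGroup E] [NormedSpace ℝ E]
    [NormedAddCommGroup G] [NormedSpace ℝ G] {f : ℝ → E × G} {f' : E × G} {s : ℝ} :
    HasDerivAt f f' s ↔
      HasDerivAt (fun s => (f s).1) f'.1 s ∧ HasDerivAt (fun s => (f s).2) f'.2 s :=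
  ⟨fun h => ⟨(ContinuousLinearMap.fst ℝ E G).hasFDerivAt.comp_hasDerivAt s h,
    (ContinuousLinearMap.snd ℝ E G).hasFDerivAt.comp_hasDerivAt s h⟩, fun h => h.1.prodMk h.2⟩

theorem hasDerivAt_evenOddForm (hH : Differentiable ℝ H) (t s : ℝ) :
    HasDerivAt (fun s => evenOddForm H (t, s)) (evenOddForm (evenOddDeriv H) (t, s)) s := by
  have h_arg : HasDerivAt (fun s : ℝ => (t + s, s ^ 2)) (1, 2 * s) s := by
    simpa using ((hasDerivAt_id s).const_add t).prodMk (hasDerivAt_pow 2 s)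
  have h_comp := (hH (t + s, s ^ 2)).hasFDerivAt.comp_hasDerivAt s h_arg
  have h_split : ((1, 2 * s) : ℝ × ℝ) = (1, 0) + (2 * s) • (0, 1) := by simp
  rw [h_split, map_add, map_smul] at h_comp
  obtain ⟨h_even, h_odd⟩ := hasDerivAt_prod_iff.1 h_comp
  refine (h_even.add ((hasDerivAt_id s).smul h_odd)).congr_deriv ?_
  simp only [evenOddForm, evenOddDeriv, id, Function.comp_apply, Prod.fst_add, Prod.snd_add,
    Prod.smul_fst, Prod.smul_snd]
  module

theorem hasDerivAt_comp_prodMk_left {G : Type*} [NormedAddCommGroup G] [NormedSpace ℝ G]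
    {K : ℝ × ℝ → G} {t y : ℝ} (hK : DifferentiableAt ℝ K (t, y)) :
    HasDerivAt (fun t => K (t, y)) (fderiv ℝ K (t, y) (1, 0)) t :=
  hK.hasFDerivAt.comp_hasDerivAt t ((hasDerivAt_id t).prodMk (hasDerivAt_const t y))

theorem hasDerivAt_comp_prodMk_right {G : Type*} [NormedAddCommGroup G] [NormedSpace ℝ G]
    {K : ℝ × ℝ → G} {t y : ℝ} (hK : DifferentiableAt ℝ K (t, y)) :
    HasDerivAt (fun y => K (t, y)) (fderiv ℝ K (t, y) (0, 1)) y :=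
  hK.hasFDerivAt.comp_hasDerivAt y ((hasDerivAt_const y t).prodMk (hasDerivAt_id y))

theorem hasDerivAt_evenOddForm_sub (hH : Differentiable ℝ H) (t : ℝ) :
    HasDerivAt (fun s => evenOddForm H (t - s, s)) (H (t, 0)).2 0 := by
  have h_arg : HasDerivAt (fun s : ℝ => (t, s ^ 2)) (0, 0) 0 := by
    simpa using (hasDerivAt_const (0 : ℝ) t).prodMk (hasDerivAt_pow 2 0)
  have h_comp : HasDerivAt (fun s : ℝ => H (t, s ^ 2)) 0 0 := by
    simpa [Function.comp_def, Prod.mk_zero_zero] using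
      (hH (t, 0 ^ 2)).hasFDerivAt.comp_hasDerivAt 0 h_arg
  obtain ⟨h_even, h_odd⟩ := hasDerivAt_prod_iff.1 h_comp
  simpa [evenOddForm] using h_even.fun_add ((hasDerivAt_id' (0 : ℝ)).fun_smul h_odd)

theorem fderiv_fderiv_apply_comm {E G : Type*} [NormedAddCommGroup E] [NormedSpace ℝ E]
    [NormedAddCommGroup G] [NormedSpace ℝ G] {f : E → G} (hf : ContDiff ℝ ∞ f) (x v w : E) :
    fderiv ℝ (fun x => fderiv ℝ f x v) x w = fderiv ℝ (fun x => fderiv ℝ f x w) x v := by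
  have h_diff : DifferentiableAt ℝ (fderiv ℝ f) x :=
    (contDiff_infty_iff_fderiv.1 hf).2.differentiable (by simp) x
  rw [fderiv_clm_apply h_diff (differentiableAt_const v),
    fderiv_clm_apply h_diff (differentiableAt_const w)]
  simpa using (hf.contDiffAt.isSymmSndFDerivAt (by
    rw [minSmoothness_of_isRCLikeNormedField]
    exact WithTop.coe_le_coe.2 le_top)).eq w v

variable {γ : ℝ → F}

theorem eventually_evenOddDeriv_eq (hH : ContDiff ℝ ∞ H)
    (hHγ : ∀ᶠ t in 𝓝 t₀, H (t, 0) = (γ t, 0)) :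
    ∀ᶠ t in 𝓝 t₀, evenOddDeriv H (t, 0) =
      (deriv γ t, (2 : ℝ) • (fderiv ℝ H (t, 0) (0, 1)).1) := by
  filter_upwards [hHγ.eventually_nhds] with t ht
  have h_deriv : HasDerivAt (fun t => (γ t, (0 : F))) (fderiv ℝ H (t, 0) (1, 0)) t :=
    (hasDerivAt_comp_prodMk_left (hH.differentiable (by simp) _)).congr_of_eventuallyEq
      (ht.mono fun _ => Eq.symm)
  obtain ⟨h_even, h_odd⟩ := hasDerivAt_prod_iff.1 h_deriv
  simp [evenOddDeriv, h_odd.unique (hasDerivAt_const t 0), ht.self_of_nhds, h_even.deriv]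

theorem eventually_fst_evenOddDeriv_evenOddDeriv_eq (hH : ContDiff ℝ ∞ H)
    (hHγ : ∀ᶠ t in 𝓝 t₀, H (t, 0) = (γ t, 0)) :
    ∀ᶠ t in 𝓝 t₀, (evenOddDeriv (evenOddDeriv H) (t, 0)).1 =
      deriv (deriv γ) t + (2 : ℝ) • (fderiv ℝ H (t, 0) (0, 1)).1 := by
  filter_upwards [(eventually_evenOddDeriv_eq hH hHγ).eventually_nhds] with t ht
  obtain ⟨h_deriv, -⟩ := hasDerivAt_prod_iff.1 ((hasDerivAt_comp_prodMk_left
    ((contDiff_evenOddDeriv hH).differentiable (by simp) _)).congr_of_eventuallyEq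
      (ht.mono fun _ => Eq.symm))
  rw [evenOddDeriv, ht.self_of_nhds, ← h_deriv.deriv]
  simp

theorem snd_evenOddDeriv_evenOddDeriv_eq (hH : ContDiff ℝ ∞ H)
    (hHγ : ∀ᶠ t in 𝓝 t₀, H (t, 0) = (γ t, 0)) :
    (evenOddDeriv (evenOddDeriv H) (t₀, 0)).2 =
      (4 : ℝ) • deriv (fun t => (fderiv ℝ H (t, 0) (0, 1)).1) t₀ +
        (6 : ℝ) • (fderiv ℝ H (t₀, 0) (0, 1)).2 := by
  have h_u := contDiff_fderiv_apply hH (1, 0)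
  have h_y := contDiff_fderiv_apply hH (0, 1)
  obtain ⟨h_deriv_a, -⟩ := hasDerivAt_prod_iff.1
    (hasDerivAt_comp_prodMk_left (h_y.differentiable (by simp) (t₀, 0)))
  obtain ⟨-, h_tangential⟩ := hasDerivAt_prod_iff.1 ((hasDerivAt_comp_prodMk_left
    ((contDiff_evenOddDeriv hH).differentiable (by simp) _)).congr_of_eventuallyEq
      ((eventually_evenOddDeriv_eq hH hHγ).mono fun _ => Eq.symm))
  have along {G : Type _} [NormedAddCommGroup G] [NormedSpace ℝ G] {K : ℝ × ℝ → G}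
      (hK : ContDiff ℝ ∞ K) : HasDerivAt (fun y => K (t₀, y)) (fderiv ℝ K (t₀, 0) (0, 1)) 0 :=
    hasDerivAt_comp_prodMk_right (hK.differentiable (by simp) _)
  have h_transversal : (fderiv ℝ (evenOddDeriv H) (t₀, 0) (0, 1)).1 =
      (fderiv ℝ (fun z => fderiv ℝ H z (1, 0)) (t₀, 0) (0, 1)).1 +
        (3 : ℝ) • (fderiv ℝ H (t₀, 0) (0, 1)).2 := by
    refine (hasDerivAt_prod_iff.1 (along (contDiff_evenOddDeriv hH))).1.unique
      ((((hasDerivAt_prod_iff.1 (along h_u)).1.add (hasDerivAt_prod_iff.1 (along hH)).2).add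
        (((hasDerivAt_id (0 : ℝ)).const_mul 2).smul
          (hasDerivAt_prod_iff.1 (along h_y)).2)).congr_deriv ?_)
    simp only [id]
    module
  rw [evenOddDeriv, h_transversal, fderiv_fderiv_apply_comm hH, ← h_deriv_a.deriv,
    ← h_tangential.deriv, deriv_fun_const_smul _ h_deriv_a.differentiableAt]
  module

/-- The covariant derivative of the vector field `X` along the curve `γ`, for the connection on `F`
whose Christoffel symbol at `x` is the bilinear map `B x`. -/
def covariantDeriv (B : F → F →L[ℝ] F →L[ℝ] F) (γ X : ℝ → F) (t : ℝ) : F :=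
  deriv X t + B (γ t) (deriv γ t) (X t)

variable {B : F → F →L[ℝ] F →L[ℝ] F}

theorem eventually_covariantDeriv_deriv_eq (hH : ContDiff ℝ ∞ H)
    (hHγ : ∀ᶠ t in 𝓝 t₀, H (t, 0) = (γ t, 0))
    (hgeo : ∀ᶠ p in 𝓝 (t₀, (0 : ℝ)), evenOddForm (evenOddDeriv (evenOddDeriv H)) p +
      B (evenOddForm H p) (evenOddForm (evenOddDeriv H) p) (evenOddForm (evenOddDeriv H) p) = 0) :
    ∀ᶠ t in 𝓝 t₀, covariantDeriv B γ (deriv γ) t = (-2 : ℝ) • (fderiv ℝ H (t, 0) (0, 1)).1 := by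
  have h_axis : ContinuousAt (fun t : ℝ => (t, (0 : ℝ))) t₀ := by fun_prop
  filter_upwards [h_axis.eventually hgeo, hHγ, eventually_evenOddDeriv_eq hH hHγ,
    eventually_fst_evenOddDeriv_evenOddDeriv_eq hH hHγ] with t h_geo h_pos h_vel h_acc
  simp only [evenOddForm_zero, h_pos, h_vel, h_acc] at h_geo
  rw [covariantDeriv, neg_smul, eq_neg_iff_add_eq_zero, ← h_geo]
  abel

theorem covariantDeriv_covariantDeriv_deriv_eq (hH : ContDiff ℝ ∞ H)
    (hHγ : ∀ᶠ t in 𝓝 t₀, H (t, 0) = (γ t, 0)) (hB : DifferentiableAt ℝ B (γ t₀))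
    (hB_symm : ∀ v w, B (γ t₀) v w = B (γ t₀) w v)
    (hgeo : ∀ᶠ p in 𝓝 (t₀, (0 : ℝ)), evenOddForm (evenOddDeriv (evenOddDeriv H)) p +
      B (evenOddForm H p) (evenOddForm (evenOddDeriv H) p) (evenOddForm (evenOddDeriv H) p) = 0) :
    covariantDeriv B γ (covariantDeriv B γ (deriv γ)) t₀ =
      (3 : ℝ) • (fderiv ℝ H (t₀, 0) (0, 1)).2 := by
  have hH' := contDiff_evenOddDeriv hH
  -- Along `s ↦ (t₀ - s, s)` the surface is stationary at `s = 0`, so `B` may be treated as constant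
  -- when the geodesic equation is differentiated in that direction.
  have h_pos := hasDerivAt_evenOddForm_sub (hH.differentiable (by simp)) t₀
  have h_vel := hasDerivAt_evenOddForm_sub (hH'.differentiable (by simp)) t₀
  have h_acc := hasDerivAt_evenOddForm_sub
    ((contDiff_evenOddDeriv hH').differentiable (by simp)) t₀
  have h_start : evenOddForm H (t₀ - 0, 0) = γ t₀ := by simp [hHγ.self_of_nhds]
  rw [hHγ.self_of_nhds] at h_pos
  have h_B : HasDerivAt (fun s => B (evenOddForm H (t₀ - s, s))) 0 0 := by
    have h_comp := HasFDerivAt.comp_hasDerivAt_of_eq (l := B) (0 : ℝ) hB.hasFDerivAt h_pos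
      h_start.symm
    simpa [Function.comp_def] using h_comp
  have h_path : Tendsto (fun s : ℝ => (t₀ - s, s)) (𝓝 0) (𝓝 (t₀, 0)) :=
    Continuous.tendsto' (by fun_prop) _ _ (by simp)
  have h_sum := (h_acc.add ((h_B.clm_apply h_vel).clm_apply h_vel)).unique
    ((hasDerivAt_const (0 : ℝ) (0 : F)).congr_of_eventuallyEq (h_path.eventually hgeo))
  have h_diff : DifferentiableAt ℝ (fun t => (fderiv ℝ H (t, 0) (0, 1)).1) t₀ :=
    (hasDerivAt_prod_iff.1 (hasDerivAt_comp_prodMk_left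
      ((contDiff_fderiv_apply hH (0, 1)).differentiable (by simp) _))).1.differentiableAt
  rw [snd_evenOddDeriv_evenOddDeriv_eq hH hHγ, h_start] at h_sum
  simp only [sub_zero, evenOddForm_zero, (eventually_evenOddDeriv_eq hH hHγ).self_of_nhds,
    map_smul, zero_apply, smul_apply, zero_add] at h_sum
  rw [hB_symm _ (deriv γ t₀)] at h_sum
  have h_second := eventually_covariantDeriv_deriv_eq hH hHγ hgeo
  rw [covariantDeriv, EventuallyEq.deriv_eq h_second, h_second.self_of_nhds,
    deriv_fun_const_smul _ h_diff, map_smul]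
  refine smul_right_injective F (two_ne_zero (α := ℝ)) ?_
  rw [← sub_eq_zero, ← neg_eq_zero, ← h_sum]
  module

end EvenOddForm

section GermDiffeomorphism

variable {E F : Type*} [NormedAddCommGroup E] [NormedSpace ℝ E] [NormedAddCommGroup F]
  [NormedSpace ℝ F]

theorem SmoothDiffeoOn.mono {σ : E → F} {U V : Set E} (hσ : SmoothDiffeoOn σ U) (hV : IsOpen V)
    (hVU : V ⊆ U) : SmoothDiffeoOn σ V := by
  obtain ⟨-, h_open, h_smooth, σinv, h_inv, h_left⟩ := hσ
  have h_image : σ '' V = σ '' U ∩ σinv ⁻¹' V := by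
    ext y
    constructor
    · rintro ⟨x, hx, rfl⟩
      exact ⟨mem_image_of_mem σ (hVU hx), by rwa [mem_preimage, h_left x (hVU hx)]⟩
    · rintro ⟨⟨x, hx, rfl⟩, hxV⟩
      exact mem_image_of_mem σ (by rwa [mem_preimage, h_left x hx] at hxV)
  exact ⟨hV, h_image ▸ h_inv.continuousOn.isOpen_inter_preimage h_open hV, h_smooth.mono hVU,
    σinv, h_inv.mono (image_mono hVU), fun x hx => h_left x (hVU hx)⟩

theorem SmoothDiffeoOn.exists_symm {σ : E → F} {U : Set E} (hσ : SmoothDiffeoOn σ U) :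
    ∃ τ : F → E, SmoothDiffeoOn τ (σ '' U) ∧ ∀ x ∈ U, τ (σ x) = x := by
  obtain ⟨hU, h_open, h_smooth, τ, h_inv, h_left⟩ := hσ
  have h_image : τ '' (σ '' U) = U := by
    rw [image_image, image_congr h_left, image_id']
  refine ⟨τ, ⟨h_open, by rwa [h_image], h_inv, σ, by rwa [h_image], ?_⟩, h_left⟩
  rintro _ ⟨x, hx, rfl⟩
  rw [h_left x hx]

theorem smoothDiffeoOn_univ_of_inverse {σ : E → F} {τ : F → E} (hσ : ContDiff ℝ ∞ σ)
    (hτ : ContDiff ℝ ∞ τ) (h_left : Function.LeftInverse τ σ)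
    (h_right : Function.RightInverse τ σ) : SmoothDiffeoOn σ univ := by
  refine ⟨isOpen_univ, ?_, hσ.contDiffOn, τ, hτ.contDiffOn, fun x _ => h_left x⟩
  simp [h_right.surjective.range_eq]

theorem exists_smoothDiffeoOn_of_hasFDerivAt [CompleteSpace E] {Ψ : E → F} {L : E ≃L[ℝ] F} {x : E}
    (hΨ : ContDiff ℝ ∞ Ψ) (hL : HasFDerivAt Ψ (L : E →L[ℝ] F) x) :
    ∃ S, x ∈ S ∧ SmoothDiffeoOn Ψ S := by
  let e := hΨ.contDiffAt.toOpenPartialHomeomorph Ψ hL (by simp)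
  let S := e.source ∩ fderiv ℝ Ψ ⁻¹' range ((↑) : (E ≃L[ℝ] F) → E →L[ℝ] F)
  have hS : IsOpen S := e.open_source.inter
    (ContinuousLinearEquiv.isOpen.preimage (contDiff_infty_iff_fderiv.1 hΨ).2.continuous)
  refine ⟨S, ⟨hΨ.contDiffAt.mem_toOpenPartialHomeomorph_source hL (by simp), L, hL.fderiv.symm⟩,
    hS, e.isOpen_image_of_subset_source hS inter_subset_left, hΨ.contDiffOn, e.symm, ?_,
    fun y hy => e.left_inv hy.1⟩
  rintro _ ⟨y, ⟨hy, M, hM⟩, rfl⟩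
  have h_symm : e.symm (Ψ y) = y := e.left_inv hy
  refine (e.contDiffAt_symm (f₀' := M) (e.map_source hy) ?_ hΨ.contDiffAt).contDiffWithinAt
  change HasFDerivAt Ψ _ (e.symm (Ψ y))
  rw [h_symm, hM]
  exact (hΨ.differentiable (by simp) y).hasFDerivAt

theorem exists_linearEquiv_comp_eq {K V W : Type*} [Field K] [AddCommGroup V] [Module K V]
    [AddCommGroup W] [Module K W] [FiniteDimensional K W] {ι A : V →ₗ[K] W}
    (hι : Function.Injective ι) (hA : Function.Injective A) :
    ∃ L : W ≃ₗ[K] W, ∀ v, L (ι v) = A v := by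
  obtain ⟨L, hL⟩ := Submodule.exists_linearEquiv_restrict_eq
    ((LinearEquiv.ofInjective ι hι).symm ≪≫ₗ LinearEquiv.ofInjective A hA)
  refine ⟨L, fun v => ?_⟩
  have h_v := hL (LinearEquiv.ofInjective ι hι v)
  rwa [LinearEquiv.trans_apply, LinearEquiv.symm_apply_apply, LinearEquiv.ofInjective_apply,
    LinearEquiv.ofInjective_apply, eq_comm] at h_v

theorem exists_smoothDiffeoOn_comp_eq_of_injective_fderiv [FiniteDimensional ℝ F] {G : E → F}
    {x : E} {ι : E →L[ℝ] F} (hG : ContDiff ℝ ∞ G) (hGx : Function.Injective (fderiv ℝ G x))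
    (hι : Function.Injective ι) :
    ∃ (Ψ : F → F) (S : Set F), ι x ∈ S ∧ SmoothDiffeoOn Ψ S ∧ ∀ y, Ψ (ι y) = G y := by
  have := FiniteDimensional.complete ℝ F
  obtain ⟨L, hL⟩ := exists_linearEquiv_comp_eq (ι := (ι : E →ₗ[ℝ] F)) (A := fderiv ℝ G x) hι hGx
  obtain ⟨r, hr⟩ := LinearMap.exists_leftInverse_of_injective (ι : E →ₗ[ℝ] F)
    (LinearMap.ker_eq_bot.2 hι)
  let retract : F →L[ℝ] E := r.toContinuousLinearMap
  let L' : F ≃L[ℝ] F := L.toContinuousLinearEquiv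
  have h_retract (y : E) : retract (ι y) = y := LinearMap.congr_fun hr y
  have h_L (y : E) : L (ι y) = fderiv ℝ G x y := hL y
  have h_deriv :
      HasFDerivAt (fun z => G (retract z) + L' (z - ι (retract z))) (L' : F →L[ℝ] F) (ι x) := by
    have h_G : HasFDerivAt G (fderiv ℝ G x) (retract (ι x)) := by
      rw [h_retract]
      exact (hG.differentiable (by simp) x).hasFDerivAt
    refine ((h_G.comp (ι x) retract.hasFDerivAt).add (L'.hasFDerivAt.comp (ι x)
      ((hasFDerivAt_id (ι x)).sub (ι.hasFDerivAt.comp (ι x) retract.hasFDerivAt)))).congr_fderiv ?_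
    ext z
    simp [L', h_L]
  obtain ⟨S, hS, hΨ⟩ := exists_smoothDiffeoOn_of_hasFDerivAt (by fun_prop) h_deriv
  exact ⟨_, S, hS, hΨ, fun y => by simp [h_retract]⟩

theorem germDiffeomorphic_of_eventuallyEq_comp {f g : E → F} {σ : E → E} {Ψ : F → F} {U : Set E}
    {S : Set F} {p : E} (hσ : SmoothDiffeoOn σ U) (hp : p ∈ U) (hΨ : SmoothDiffeoOn Ψ S)
    (hgp : g (σ p) ∈ S) (hg : ContinuousAt g (σ p)) (hf : f =ᶠ[𝓝 p] Ψ ∘ g ∘ σ) :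
    GermDiffeomorphic f p g (σ p) := by
  have h_cont : ContinuousAt (g ∘ σ) p :=
    hg.comp (hσ.2.2.1.contDiffAt (hσ.1.mem_nhds hp)).continuousAt
  obtain ⟨N, hN, hN_open, hpN⟩ := eventually_nhds_iff.1
    ((hf.and (h_cont.eventually_mem (hΨ.1.mem_nhds hgp))).and (hσ.1.mem_nhds hp))
  have h_mem (x : E) (hx : x ∈ N) : f x ∈ Ψ '' S :=
    ⟨g (σ x), (hN x hx).1.2, (hN x hx).1.1.symm⟩
  obtain ⟨τ, hτ, h_left⟩ := hΨ.exists_symm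
  have h_conj (x : E) (hx : x ∈ N) : τ (f x) = g (σ x) := by
    rw [(hN x hx).1.1]
    exact h_left _ (hN x hx).1.2
  exact ⟨N, Ψ '' S, σ, τ, hσ.mono hN_open fun x hx => (hN x hx).2, hτ, hpN, h_mem p hpN, rfl,
    h_conj p hpN, h_mem, h_conj⟩

theorem injective_fderiv_add_smul {P Q : ℝ × ℝ → F} {t₀ : ℝ}
    (hP : DifferentiableAt ℝ P (t₀, 0)) (hQ : DifferentiableAt ℝ Q (t₀, 0))
    (hind : LinearIndependent ℝ
      ![fderiv ℝ P (t₀, 0) (1, 0), fderiv ℝ P (t₀, 0) (0, 1), Q (t₀, 0)]) :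
    Function.Injective (fderiv ℝ
      (fun c : Fin 3 → ℝ => P (t₀ + c 0, c 1) + c 2 • Q (t₀ + c 0, c 1)) 0) := by
  let coord (i : Fin 3) : (Fin 3 → ℝ) →L[ℝ] ℝ := .proj i
  have h_arg : HasFDerivAt (fun c : Fin 3 → ℝ => (t₀ + c 0, c 1)) ((coord 0).prod (coord 1)) 0 :=
    ((coord 0).hasFDerivAt.const_add t₀).prodMk (coord 1).hasFDerivAt
  have h_base : (t₀, (0 : ℝ)) = (t₀ + (0 : Fin 3 → ℝ) 0, (0 : Fin 3 → ℝ) 1) := by simp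
  rw [h_base] at hP hQ
  have h_G := (hP.hasFDerivAt.comp 0 h_arg).fun_add
    ((coord 2).hasFDerivAt.fun_smul (hQ.hasFDerivAt.comp 0 h_arg))
  rw [← h_base] at h_G
  convert hind.fintypeLinearCombination_injective using 1
  ext1 c
  have h_split (A : ℝ × ℝ →L[ℝ] F) : A (c 0, c 1) = c 0 • A (1, 0) + c 1 • A (0, 1) := by
    rw [← map_smul, ← map_smul, ← map_add]
    simp
  refine (DFunLike.congr_fun h_G.fderiv c).trans ?_
  simp [coord, Fintype.linearCombination_apply, Fin.sum_univ_three, h_split]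

theorem germDiffeomorphic_cuspidalEdge [FiniteDimensional ℝ F] {f : ℝ × ℝ → F}
    {P Q : ℝ × ℝ → F} {t₀ : ℝ} (hP : ContDiff ℝ ∞ P) (hQ : ContDiff ℝ ∞ Q)
    (hind : LinearIndependent ℝ
      ![fderiv ℝ P (t₀, 0) (1, 0), fderiv ℝ P (t₀, 0) (0, 1), Q (t₀, 0)])
    (hf : ∀ᶠ p in 𝓝 (t₀, (0 : ℝ)),
      f p = P (p.1 + p.2, p.2 ^ 2) + p.2 ^ 3 • Q (p.1 + p.2, p.2 ^ 2))
    {ι : (Fin 3 → ℝ) →L[ℝ] F} (hι : Function.Injective ι) :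
    GermDiffeomorphic f (t₀, 0) (fun p => ι ![p.1, p.2 ^ 2, p.2 ^ 3]) (0, 0) := by
  obtain ⟨Ψ, S, h_mem, hΨ, hΨG⟩ := exists_smoothDiffeoOn_comp_eq_of_injective_fderiv
    (by fun_prop) (injective_fderiv_add_smul (hP.differentiable (by simp) _)
      (hQ.differentiable (by simp) _) hind) hι
  let σ (p : ℝ × ℝ) : ℝ × ℝ := (p.1 + p.2 - t₀, p.2)
  have hσ : SmoothDiffeoOn σ univ :=
    smoothDiffeoOn_univ_of_inverse (τ := fun q => (q.1 - q.2 + t₀, q.2)) (by fun_prop)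
      (by fun_prop) (fun p => Prod.ext (by simp only [σ]; ring) rfl)
      (fun q => Prod.ext (by simp only [σ]; ring) rfl)
  have hσ_base : σ (t₀, 0) = (0, 0) := by simp [σ]
  have h_edge : Continuous fun p : ℝ × ℝ => ![p.1, p.2 ^ 2, p.2 ^ 3] :=
    continuous_fst.matrixVecCons ((continuous_snd.pow 2).matrixVecCons
      ((continuous_snd.pow 3).matrixVecCons continuous_const))
  rw [← hσ_base]
  refine germDiffeomorphic_of_eventuallyEq_comp hσ (mem_univ _) hΨ ?_
    (ι.continuous.comp h_edge).continuousAt ?_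
  · have h_zero : ![(0 : ℝ), 0, 0] = 0 := by simp
    simpa [hσ_base, h_zero] using h_mem
  · filter_upwards [hf] with p hp
    simp [hp, hΨG, σ]

end GermDiffeomorphism

section GeodesicVariation

theorem exists_evenOddForm_eventuallyEq {ι : Type} [Fintype ι] {f : ℝ × ℝ → ι → ℝ} {t₀ : ℝ}
    (hf : ∀ᶠ p in 𝓝 (t₀, (0 : ℝ)), ContDiffAt ℝ ∞ f p) :
    ∃ H : ℝ × ℝ → (ι → ℝ) × (ι → ℝ), ContDiff ℝ ∞ H ∧ f =ᶠ[𝓝 (t₀, 0)] evenOddForm H := by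
  have h_shear : Tendsto (fun p : ℝ × ℝ => (p.1 - p.2, p.2)) (𝓝 (t₀, 0)) (𝓝 (t₀, 0)) :=
    Continuous.tendsto' (by fun_prop) _ _ (by simp)
  have h_unshear : Tendsto (fun p : ℝ × ℝ => (p.1 + p.2, p.2)) (𝓝 (t₀, 0)) (𝓝 (t₀, 0)) :=
    Continuous.tendsto' (by fun_prop) _ _ (by simp)
  obtain ⟨P, R, hP, hR, h_eq⟩ := exists_even_odd_eventually
    (f := fun p => f (p.1 - p.2, p.2)) (p₀ := (t₀, 0))
    ((h_shear.eventually hf).mono fun p hp => hp.comp p (by fun_prop))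
  refine ⟨fun z => (P z, R z), hP.prodMk hR, ?_⟩
  filter_upwards [h_unshear.eventually h_eq] with p hp
  simpa [evenOddForm] using hp

theorem eventually_eventuallyEq_comp_prodMk {X Y Z : Type*} [TopologicalSpace X]
    [TopologicalSpace Y] {f g : X × Y → Z} {p₀ : X × Y} (h : f =ᶠ[𝓝 p₀] g) :
    ∀ᶠ p in 𝓝 p₀, (fun s => f (p.1, s)) =ᶠ[𝓝 p.2] fun s => g (p.1, s) :=
  h.eventually_nhds.mono fun p hp => (Continuous.prodMk_right p.1).continuousAt.eventually hp

variable {F : Type*} [NormedAddCommGroup F] [NormedSpace ℝ F] {H : ℝ × ℝ → F × F}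
  {f : ℝ × ℝ → F} {γ : ℝ → F} {t₀ : ℝ}

theorem eventually_axis_eq_of_initial_conditions (hH : ContDiff ℝ ∞ H)
    (hf : f =ᶠ[𝓝 (t₀, 0)] evenOddForm H) (h_pos : ∀ᶠ t in 𝓝 t₀, f (t, 0) = γ t)
    (h_vel : ∀ᶠ t in 𝓝 t₀, deriv (fun s => f (t, s)) 0 = deriv γ t) :
    ∀ᶠ t in 𝓝 t₀, H (t, 0) = (γ t, 0) := by
  have h_diff : Differentiable ℝ H := hH.differentiable (by simp)
  have h_axis : ContinuousAt (fun t : ℝ => (t, (0 : ℝ))) t₀ := by fun_prop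
  have h_even : ∀ᶠ t in 𝓝 t₀, (H (t, 0)).1 = γ t := by
    filter_upwards [h_axis.eventually hf, h_pos] with t ht h_pos
    rw [← h_pos, ht, evenOddForm_zero]
  filter_upwards [h_even.eventually_nhds, h_vel,
    h_axis.eventually (eventually_eventuallyEq_comp_prodMk hf)] with t h_even h_vel h_curve
  have h_tangential : HasDerivAt γ (fderiv ℝ H (t, 0) (1, 0)).1 t :=
    (hasDerivAt_prod_iff.1 (hasDerivAt_comp_prodMk_left (h_diff (t, 0)))).1.congr_of_eventuallyEq
      (h_even.mono fun _ => Eq.symm)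
  rw [h_curve.deriv_eq, (hasDerivAt_evenOddForm h_diff t 0).deriv, h_tangential.deriv] at h_vel
  exact Prod.ext h_even.self_of_nhds (by simpa [evenOddDeriv] using h_vel)

theorem eventually_geodesic_evenOddForm {B : F → F →L[ℝ] F →L[ℝ] F} (hH : ContDiff ℝ ∞ H)
    (hf : f =ᶠ[𝓝 (t₀, 0)] evenOddForm H)
    (hgeo : ∀ᶠ p in 𝓝 (t₀, (0 : ℝ)),
      covariantDeriv B (fun s => f (p.1, s)) (deriv fun s => f (p.1, s)) p.2 = 0) :
    ∀ᶠ p in 𝓝 (t₀, (0 : ℝ)), evenOddForm (evenOddDeriv (evenOddDeriv H)) p +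
      B (evenOddForm H p) (evenOddForm (evenOddDeriv H) p) (evenOddForm (evenOddDeriv H) p) =
        0 := by
  filter_upwards [hgeo, hf, eventually_eventuallyEq_comp_prodMk hf] with p h_geo h_pos h_curve
  have h_vel (K : ℝ × ℝ → F × F) (hK : ContDiff ℝ ∞ K) :
      deriv (fun s => evenOddForm K (p.1, s)) = fun s => evenOddForm (evenOddDeriv K) (p.1, s) :=
    funext fun s => (hasDerivAt_evenOddForm (hK.differentiable (by simp)) p.1 s).deriv
  rw [covariantDeriv, h_curve.deriv.deriv_eq, h_curve.deriv_eq, h_vel H hH,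
    h_vel _ (contDiff_evenOddDeriv hH)] at h_geo
  rwa [← h_pos]

theorem exists_evenOddForm_eq_add_cube_smul {F : Type} [NormedAddCommGroup F] [NormedSpace ℝ F]
    [CompleteSpace F] {H : ℝ × ℝ → F × F} (hH : ContDiff ℝ ∞ H)
    (h_axis : ∀ᶠ t in 𝓝 t₀, (H (t, 0)).2 = 0) :
    ∃ Q : ℝ × ℝ → F, ContDiff ℝ ∞ Q ∧ Q (t₀, 0) = (fderiv ℝ H (t₀, 0) (0, 1)).2 ∧
      ∀ᶠ p in 𝓝 (t₀, (0 : ℝ)), evenOddForm H p =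
        (H (p.1 + p.2, p.2 ^ 2)).1 + p.2 ^ 3 • Q (p.1 + p.2, p.2 ^ 2) := by
  obtain ⟨Q, hQ, h_eq⟩ := exists_contDiff_eq_add_smul hH.snd
  refine ⟨Q, hQ, ?_, ?_⟩
  · have h_odd := (hasDerivAt_prod_iff.1
      (hasDerivAt_comp_prodMk_right (hH.differentiable (by simp) (t₀, 0)))).2
    have h_quot := hasDerivAt_comp_prodMk_right (hQ.differentiable (by simp) (t₀, 0))
    have h_curve : (fun y => (H (t₀, y)).2) = fun y => y • Q (t₀, y) :=
      funext fun y => by rw [h_eq t₀ y, h_axis.self_of_nhds, zero_add]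
    rw [h_curve] at h_odd
    simpa using ((hasDerivAt_id' (0 : ℝ)).fun_smul h_quot).unique h_odd
  · have h_sum : Tendsto (fun p : ℝ × ℝ => p.1 + p.2) (𝓝 (t₀, 0)) (𝓝 t₀) :=
      Continuous.tendsto' (by fun_prop) _ _ (by simp)
    filter_upwards [h_sum.eventually h_axis] with p hp
    rw [evenOddForm, h_eq, hp, zero_add, smul_smul, ← pow_succ']

theorem germDiffeomorphic_cuspidalEdge_of_geodesics {κ : Type} [Fintype κ]
    {f : ℝ × ℝ → κ → ℝ} {γ : ℝ → κ → ℝ} {B : (κ → ℝ) → (κ → ℝ) →L[ℝ] (κ → ℝ) →L[ℝ] (κ → ℝ)}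
    (hf : ∀ᶠ p in 𝓝 (t₀, (0 : ℝ)), ContDiffAt ℝ ∞ f p)
    (h_pos : ∀ᶠ t in 𝓝 t₀, f (t, 0) = γ t)
    (h_vel : ∀ᶠ t in 𝓝 t₀, deriv (fun s => f (t, s)) 0 = deriv γ t)
    (hgeo : ∀ᶠ p in 𝓝 (t₀, (0 : ℝ)),
      covariantDeriv B (fun s => f (p.1, s)) (deriv fun s => f (p.1, s)) p.2 = 0)
    (hB : DifferentiableAt ℝ B (γ t₀)) (hB_symm : ∀ v w, B (γ t₀) v w = B (γ t₀) w v)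
    (hind : LinearIndependent ℝ ![deriv γ t₀, covariantDeriv B γ (deriv γ) t₀,
      covariantDeriv B γ (covariantDeriv B γ (deriv γ)) t₀])
    {ι : (Fin 3 → ℝ) →L[ℝ] (κ → ℝ)} (hι : Function.Injective ι) :
    GermDiffeomorphic f (t₀, 0) (fun p => ι ![p.1, p.2 ^ 2, p.2 ^ 3]) (0, 0) := by
  obtain ⟨H, hH, hfH⟩ := exists_evenOddForm_eventuallyEq hf
  have hHγ := eventually_axis_eq_of_initial_conditions hH hfH h_pos h_vel
  have hgeoH := eventually_geodesic_evenOddForm hH hfH hgeo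
  obtain ⟨Q, hQ, hQ_zero, hQH⟩ := exists_evenOddForm_eq_add_cube_smul hH
    (hHγ.mono fun t ht => congrArg Prod.snd ht)
  refine germDiffeomorphic_cuspidalEdge hH.fst hQ ?_ ((hfH.and hQH).mono fun p hp =>
    hp.1.trans hp.2) hι
  have h_fderiv (v : ℝ × ℝ) :
      fderiv ℝ (fun z => (H z).1) (t₀, 0) v = (fderiv ℝ H (t₀, 0) v).1 := by
    rw [fderiv.fst (hH.differentiable (by simp) _)]
    rfl
  have h_tangential : (fderiv ℝ H (t₀, 0) (1, 0)).1 = deriv γ t₀ := by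
    have h_deriv := (hasDerivAt_prod_iff.1 (hasDerivAt_comp_prodMk_left
      (hH.differentiable (by simp) (t₀, 0)))).1
    rw [← h_deriv.deriv]
    exact EventuallyEq.deriv_eq (hHγ.mono fun t ht => congrArg Prod.fst ht)
  rw [(eventually_covariantDeriv_deriv_eq hH hHγ hgeoH).self_of_nhds,
    covariantDeriv_covariantDeriv_deriv_eq hH hHγ hB hB_symm hgeoH] at hind
  rw [h_fderiv, h_fderiv, h_tangential, hQ_zero]
  have h_scale : ![deriv γ t₀, (fderiv ℝ H (t₀, 0) (0, 1)).1, (fderiv ℝ H (t₀, 0) (0, 1)).2] =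
      ![1, Units.mk0 (-2 : ℝ)⁻¹ (by norm_num), Units.mk0 (3 : ℝ)⁻¹ (by norm_num)] •
        ![deriv γ t₀, (-2 : ℝ) • (fderiv ℝ H (t₀, 0) (0, 1)).1,
          (3 : ℝ) • (fderiv ℝ H (t₀, 0) (0, 1)).2] := by
    ext i
    fin_cases i <;> simp [Units.smul_def]
  rw [h_scale]
  exact hind.units_smul _

end GeodesicVariation

section Christoffel

theorem differentiableAt_smulRight {E F G : Type*} [NormedAddCommGroup E] [NormedSpace ℝ E]
    [NormedAddCommGroup F] [NormedSpace ℝ F] [NormedAddCommGroup G] [NormedSpace ℝ G]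
    (f : E →L[ℝ] ℝ) {c : G → F} {x : G} (hc : DifferentiableAt ℝ c x) :
    DifferentiableAt ℝ (fun x => f.smulRight (c x)) x := by
  fun_prop

theorem differentiableAt_sum_smulRight_smulRight {κ E F G : Type*} [Fintype κ]
    [NormedAddCommGroup E] [NormedSpace ℝ E] [NormedAddCommGroup F] [NormedSpace ℝ F]
    [NormedAddCommGroup G] [NormedSpace ℝ G] (f : κ → E →L[ℝ] ℝ) {c : κ → κ → G → F} {x : G}
    (hc : ∀ μ ν, DifferentiableAt ℝ (c μ ν) x) :
    DifferentiableAt ℝ (fun x => ∑ μ, ∑ ν, (f μ).smulRight ((f ν).smulRight (c μ ν x))) x :=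
  .fun_sum fun μ _ => .fun_sum fun ν _ =>
    differentiableAt_smulRight _ (differentiableAt_smulRight _ (hc μ ν))

variable {m : ℕ} {Γ : (Fin m → ℝ) → Fin m → Fin m → Fin m → ℝ}

/-- The Christoffel symbols at `x` as a bilinear map, `(v, w) ↦ Σ_{μ,ν} Γ^l_{μν}(x) v^μ w^ν`. -/
def christoffelMap (Γ : (Fin m → ℝ) → Fin m → Fin m → Fin m → ℝ) (x : Fin m → ℝ) :
    (Fin m → ℝ) →L[ℝ] (Fin m → ℝ) →L[ℝ] (Fin m → ℝ) :=
  ∑ μ, ∑ ν, (ContinuousLinearMap.proj (R := ℝ) (φ := fun _ : Fin m => ℝ) μ).smulRight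
    ((ContinuousLinearMap.proj (R := ℝ) (φ := fun _ : Fin m => ℝ) ν).smulRight fun l => Γ x l μ ν)

theorem christoffelMap_apply (x v w : Fin m → ℝ) (l : Fin m) :
    christoffelMap Γ x v w l = ∑ μ, ∑ ν, Γ x l μ ν * v μ * w ν := by
  simp [christoffelMap, Finset.sum_apply, mul_comm, mul_left_comm]

theorem differentiableAt_christoffelMap {x : Fin m → ℝ}
    (hΓ : ∀ l μ ν, DifferentiableAt ℝ (fun x => Γ x l μ ν) x) :
    DifferentiableAt ℝ (christoffelMap Γ) x :=
  differentiableAt_sum_smulRight_smulRight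
    (fun μ => ContinuousLinearMap.proj (R := ℝ) (φ := fun _ : Fin m => ℝ) μ)
    fun μ ν => differentiableAt_pi.2 fun l => hΓ l μ ν

theorem christoffelMap_comm {x : Fin m → ℝ} (hΓ : ∀ l μ ν, Γ x l μ ν = Γ x l ν μ)
    (v w : Fin m → ℝ) : christoffelMap Γ x v w = christoffelMap Γ x w v := by
  ext l
  rw [christoffelMap_apply, christoffelMap_apply, Finset.sum_comm]
  simp only [hΓ l, mul_right_comm]

theorem covDeriv_succ_eq_covariantDeriv {γ : ℝ → Fin m → ℝ} {k : ℕ} {t : ℝ}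
    (h : DifferentiableAt ℝ (covDeriv Γ γ k) t) :
    covDeriv Γ γ (k + 1) t = covariantDeriv (christoffelMap Γ) γ (covDeriv Γ γ k) t := by
  ext l
  rw [covDeriv, covariantDeriv, Pi.add_apply, christoffelMap_apply,
    deriv_pi (differentiableAt_pi.1 h)]

theorem contDiffAt_deriv {F : Type*} [NormedAddCommGroup F] [NormedSpace ℝ F] {f : ℝ → F} {t : ℝ}
    {k n : WithTop ℕ∞} (hf : ContDiffAt ℝ n f t) (hkn : k + 1 ≤ n) : ContDiffAt ℝ k (deriv f) t :=
  (hf.fderiv_right hkn).clm_apply contDiffAt_const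

theorem covDeriv_one_eventuallyEq {γ : ℝ → Fin m → ℝ} {t₀ : ℝ} (hγ : ContDiffAt ℝ 2 γ t₀) :
    covDeriv Γ γ 1 =ᶠ[𝓝 t₀] covariantDeriv (christoffelMap Γ) γ (deriv γ) := by
  filter_upwards [hγ.eventually (by simp)] with t ht
  exact covDeriv_succ_eq_covariantDeriv
    ((contDiffAt_deriv ht (by norm_num)).differentiableAt one_ne_zero)

theorem covDeriv_two_eq_covariantDeriv {γ : ℝ → Fin m → ℝ} {t₀ : ℝ} (hγ : ContDiffAt ℝ 3 γ t₀)
    (hΓ : DifferentiableAt ℝ (christoffelMap Γ) (γ t₀)) :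
    covDeriv Γ γ 2 t₀ = covariantDeriv (christoffelMap Γ) γ
      (covariantDeriv (christoffelMap Γ) γ (deriv γ)) t₀ := by
  have h_vel : ContDiffAt ℝ 2 (deriv γ) t₀ := contDiffAt_deriv hγ (by norm_num)
  have h_acc : ContDiffAt ℝ 1 (deriv (deriv γ)) t₀ := contDiffAt_deriv h_vel (by norm_num)
  have h_one := covDeriv_one_eventuallyEq (Γ := Γ) (hγ.of_le (by norm_num : (2 : WithTop ℕ∞) ≤ 3))
  have h_diff : DifferentiableAt ℝ (covariantDeriv (christoffelMap Γ) γ (deriv γ)) t₀ :=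
    (h_acc.differentiableAt one_ne_zero).add
      (((DifferentiableAt.fun_comp' t₀ hΓ (hγ.differentiableAt (by simp))).clm_apply
        (h_vel.differentiableAt two_ne_zero)).clm_apply (h_vel.differentiableAt two_ne_zero))
  rw [covDeriv_succ_eq_covariantDeriv (h_diff.congr_of_eventuallyEq h_one), covariantDeriv,
    h_one.deriv_eq, h_one.eq_of_nhds]
  rfl

variable {Ω : Set (Fin m → ℝ)} {W : Set ((Fin m → ℝ) × (Fin m → ℝ) × ℝ)}
  {φ : (Fin m → ℝ) × (Fin m → ℝ) × ℝ → Fin m → ℝ}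

theorem IsGeodesicFlow.covariantDeriv_deriv_eq_zero (hφ : IsGeodesicFlow Γ Ω W φ)
    {x v : Fin m → ℝ} {s : ℝ} (h : (x, v, s) ∈ W) :
    covariantDeriv (christoffelMap Γ) (fun s => φ (x, v, s)) (deriv fun s => φ (x, v, s)) s =
      0 := by
  have h_smooth : ContDiffAt ℝ ∞ (fun s => φ (x, v, s)) s :=
    (hφ.smooth.contDiffAt (hφ.isOpen_W.mem_nhds h)).comp s (by fun_prop)
  have h_smooth' : ContDiffAt ℝ 2 (fun s => φ (x, v, s)) s := h_smooth.of_le ENat.LEInfty.out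
  have h_coord (l : Fin m) : (fun s => deriv (fun s => φ (x, v, s)) s l) =ᶠ[𝓝 s]
      deriv fun s => φ (x, v, s) l := by
    filter_upwards [h_smooth'.eventually (by simp)] with u hu
    rw [deriv_pi (differentiableAt_pi.1 (hu.differentiableAt two_ne_zero))]
  rw [← (covDeriv_one_eventuallyEq h_smooth').eq_of_nhds]
  ext l
  simp only [covDeriv, (h_coord l).deriv_eq, (h_coord _).eq_of_nhds]
  exact hφ.geodesic _ h l

theorem tangent_surface_cuspidal_edge_general (hφ : IsGeodesicFlow Γ Ω W φ) {I : Set ℝ}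
    (hI : IsOpen I) {γ : ℝ → Fin m → ℝ} (hγ : ContDiffOn ℝ ∞ γ I) (hγΩ : ∀ t ∈ I, γ t ∈ Ω)
    {t₀ : ℝ} (ht₀ : t₀ ∈ I) (hΓ : ∀ l μ ν, DifferentiableAt ℝ (fun x => Γ x l μ ν) (γ t₀))
    (hTF : ∀ l μ ν, Γ (γ t₀) l μ ν = Γ (γ t₀) l ν μ)
    (hind : LinearIndependent ℝ ![covDeriv Γ γ 0 t₀, covDeriv Γ γ 1 t₀, covDeriv Γ γ 2 t₀])
    {ι : (Fin 3 → ℝ) →L[ℝ] (Fin m → ℝ)} (hι : Function.Injective ι) :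
    GermDiffeomorphic (fun p : ℝ × ℝ => φ (γ p.1, deriv γ p.1, p.2)) (t₀, (0 : ℝ))
      (fun p : ℝ × ℝ => ι ![p.1, p.2 ^ 2, p.2 ^ 3]) ((0 : ℝ), (0 : ℝ)) := by
  have h_nhds : ∀ᶠ t in 𝓝 t₀, t ∈ I := hI.mem_nhds ht₀
  have h_smooth (t : ℝ) (ht : t ∈ I) : ContDiffAt ℝ ∞ γ t := hγ.contDiffAt (hI.mem_nhds ht)
  have h_lift (p : ℝ × ℝ) (hp : p.1 ∈ I) :
      ContDiffAt ℝ ∞ (fun p : ℝ × ℝ => (γ p.1, deriv γ p.1, p.2)) p :=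
    ((h_smooth p.1 hp).comp p contDiffAt_fst).prodMk
      (((contDiffAt_deriv (h_smooth p.1 hp) (by simp)).comp p contDiffAt_fst).prodMk contDiffAt_snd)
  have h_W : ∀ᶠ p in 𝓝 (t₀, (0 : ℝ)), (γ p.1, deriv γ p.1, p.2) ∈ W :=
    (h_lift (t₀, 0) ht₀).continuousAt.eventually_mem
      (hφ.isOpen_W.mem_nhds (hφ.mem_zero _ (hγΩ t₀ ht₀) _))
  have hB := differentiableAt_christoffelMap hΓ
  refine germDiffeomorphic_cuspidalEdge_of_geodesics (γ := γ) (B := christoffelMap Γ) ?_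
    (h_nhds.mono fun t ht => hφ.init_pos _ (hγΩ t ht) _)
    (h_nhds.mono fun t ht => hφ.init_vel _ (hγΩ t ht) (deriv γ t))
    (h_W.mono fun p hp => hφ.covariantDeriv_deriv_eq_zero hp) hB (christoffelMap_comm hTF) ?_ hι
  · filter_upwards [h_W, continuousAt_fst.eventually h_nhds] with p hpW hpI
    exact (hφ.smooth.contDiffAt (hφ.isOpen_W.mem_nhds hpW)).comp p (h_lift p hpI)
  · rwa [← (covDeriv_one_eventuallyEq ((h_smooth t₀ ht₀).of_le ENat.LEInfty.out)).eq_of_nhds,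
      ← covDeriv_two_eq_covariantDeriv ((h_smooth t₀ ht₀).of_le ENat.LEInfty.out) hB]

end Christoffel

/-- For a torsion-free connection on an open set `Ω ⊆ ℝ³`, a geodesic flow
`φ`, and a `C^∞` curve `γ : I → Ω`, if `∇γ(t₀), ∇²γ(t₀), ∇³γ(t₀)` are linearly
independent then the germ at `(t₀, 0)` of the `∇`-tangent surface
`f(t,s) = φ(γ(t), γ'(t), s)` is diffeomorphic to the cuspidal edge `(u,w) ↦ (u, w², w³)`. -/
theorem tangent_surface_cuspidal_edge
    (Γ : (Fin 3 → ℝ) → Fin 3 → Fin 3 → Fin 3 → ℝ)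
    (Ω : Set (Fin 3 → ℝ)) (hΩ : IsOpen Ω)
    (hΓ : ∀ l μ ν, ContDiffOn ℝ (⊤ : ℕ∞) (fun x => Γ x l μ ν) Ω)
    (hTF : ∀ x l μ ν, Γ x l μ ν = Γ x l ν μ)
    (W : Set ((Fin 3 → ℝ) × (Fin 3 → ℝ) × ℝ))
    (φ : (Fin 3 → ℝ) × (Fin 3 → ℝ) × ℝ → Fin 3 → ℝ)
    (hφ : IsGeodesicFlow Γ Ω W φ)
    (I : Set ℝ) (hI : IsOpen I) (hI' : I.OrdConnected)
    (γ : ℝ → Fin 3 → ℝ) (hγ : ContDiffOn ℝ (⊤ : ℕ∞) γ I) (hγΩ : ∀ t ∈ I, γ t ∈ Ω)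
    (t₀ : ℝ) (ht₀ : t₀ ∈ I)
    (hind : LinearIndependent ℝ
      ![covDeriv Γ γ 0 t₀, covDeriv Γ γ 1 t₀, covDeriv Γ γ 2 t₀]) :
    GermDiffeomorphic
      (fun p : ℝ × ℝ => φ (γ p.1, deriv γ p.1, p.2)) (t₀, (0 : ℝ))
      (fun p : ℝ × ℝ => ![p.1, p.2 ^ 2, p.2 ^ 3]) ((0 : ℝ), (0 : ℝ)) := by
  exact tangent_surface_cuspidal_edge_general hφ hI hγ hγΩ ht₀
    (fun l μ ν => ((hΓ l μ ν).contDiffAt (hΩ.mem_nhds (hγΩ t₀ ht₀))).differentiableAt (by simp))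
    (hTF _) hind (ι := .id ℝ _) Function.injective_id
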